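/- Let a be a ribbon with n ≥ 4 nodes. Then every extension of a has at least δ₀(a) critical points in the open unit disk; that is, γ(a) ≥ δ₀(a). -/

import Mathlib

open scoped RealInnerProductSpace

noncomputable section

abbrev E2 : Type := EuclideanSpace ℝ (Fin 2)

/-- The point (cos t, sin t) on the unit circle in ℝ². -/
def sphPt (t : ℝ) : E2 := (EuclideanSpace.equiv (Fin 2) ℝ).symm ![Real.cos t, Real.sin t]

/-- A ribbon with `n` nodes, encoded via the angle parametrization `g = φ ∘ (cos, sin)`
of a C^∞ function `φ : S¹ → ℝ` whose critical points on the circle are exactly the `n`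
nondegenerate local extrema (nodes) at angles `θ 0 < θ 1 < ⋯ < θ (n-1)` in `[0, 2π)`,
with pairwise distinct critical values, together with a marking `ν` of the nodes by `±1`. -/
structure Ribbon (n : ℕ) : Type where
  g : ℝ → ℝ
  θ : Fin n → ℝ
  ν : Fin n → ℤ
  n_even : Even n
  n_pos : 0 < n
  smooth_g : ContDiff ℝ (⊤ : ℕ∞) g
  periodic_g : Function.Periodic g (2 * Real.pi)
  theta_mem : ∀ i, θ i ∈ Set.Ico (0 : ℝ) (2 * Real.pi)
  theta_mono : StrictMono θ
  node_crit : ∀ i, deriv g (θ i) = 0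
  node_nondeg : ∀ i, deriv (deriv g) (θ i) ≠ 0
  crit_only : ∀ t ∈ Set.Ico (0 : ℝ) (2 * Real.pi), deriv g t = 0 → ∃ i, t = θ i
  values_distinct : ∀ i j, g (θ i) = g (θ j) → i = j
  nu_sign : ∀ i, ν i = 1 ∨ ν i = -1

/-- The signature σ = s₊ − s₋ of a ribbon. -/
def Ribbon.sigma {n : ℕ} (a : Ribbon n) : ℤ := ∑ i, a.ν i

/-- Critical points of `f` in the open unit disk. -/
def critPts (f : E2 → ℝ) : Set E2 :=
  {x | x ∈ Metric.ball (0 : E2) 1 ∧ fderiv ℝ f x = 0}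

/-- `f : ℝ² → ℝ` is an extension of the ribbon `a`: it is C^∞, agrees with `φ` on the unit
circle, has nowhere-vanishing gradient on the circle, and at each node the radial derivative
`⟪∇f(p), p⟫` has sign `ν p` if `p` is a local maximum of `φ` (second derivative of `g`
negative there) and sign `−ν p` if `p` is a local minimum of `φ`. -/
def IsExtension {n : ℕ} (a : Ribbon n) (f : E2 → ℝ) : Prop :=
  ContDiff ℝ (⊤ : ℕ∞) f ∧
  (∀ t : ℝ, f (sphPt t) = a.g t) ∧
  (∀ x ∈ Metric.sphere (0 : E2) 1, fderiv ℝ f x ≠ 0) ∧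
  (∀ i : Fin n,
    (deriv (deriv a.g) (a.θ i) < 0 →
      0 < (a.ν i : ℝ) * ⟪gradient f (sphPt (a.θ i)), sphPt (a.θ i)⟫) ∧
    (0 < deriv (deriv a.g) (a.θ i) →
      (a.ν i : ℝ) * ⟪gradient f (sphPt (a.θ i)), sphPt (a.θ i)⟫ < 0))

/-- The ribbon invariant γ: the infimum, over all extensions `f` of `a`, of the number of
critical points of `f` in the open unit disk (a value in `ℕ∞`). -/
def gammaR {n : ℕ} (a : Ribbon n) : ℕ∞ :=
  sInf {k : ℕ∞ | ∃ f : E2 → ℝ, IsExtension a f ∧ (critPts f).encard = k}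

/-- The cyclically next node index. -/
def Ribbon.next {n : ℕ} (a : Ribbon n) (i : Fin n) : Fin n :=
  ⟨((i : ℕ) + 1) % n, Nat.mod_lt _ a.n_pos⟩

/-- The reduced cluster number δ₀(a): the least cardinality of a finite subset of ℝ meeting
every closed interval with endpoints `l i`, `l (i+1)` such that the nodes `p i`, `p (i+1)` are
both positive and the interval contains no level of a negative node. -/
def reducedClusterNumber {n : ℕ} (a : Ribbon n) : ℕ :=
  sInf {k : ℕ | ∃ A : Finset ℝ, A.card = k ∧
    ∀ i : Fin n,
      (a.ν i = 1 ∧ a.ν (a.next i) = 1 ∧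
        ∀ j : Fin n, a.ν j = -1 →
          a.g (a.θ j) ∉ Set.uIcc (a.g (a.θ i)) (a.g (a.θ (a.next i)))) →
      ∃ x ∈ A, x ∈ Set.uIcc (a.g (a.θ i)) (a.g (a.θ (a.next i)))}

open Set Filter Topology Metric

lemma aux_conn_limit (f : E2 → ℝ) (hf : Continuous f) (m : ℝ) (P Z : E2)
    (h : ∀ l > m, ∃ S : Set E2, IsPreconnected S ∧ S ⊆ {x | x ∈ closedBall (0:E2) 1 ∧ f x ≤ l} ∧
      P ∈ S ∧ Z ∈ S) :
    ∃ C : Set E2, IsPreconnected C ∧ IsCompact C ∧ C ⊆ {x | x ∈ closedBall (0:E2) 1 ∧ f x ≤ m} ∧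
      P ∈ C ∧ Z ∈ C := by
  set K : Set E2 := {x | x ∈ closedBall (0:E2) 1 ∧ f x ≤ m} with hK
  have hKc : IsCompact K :=
    (isCompact_closedBall (0:E2) 1).inter_right (isClosed_le hf continuous_const)
  have hPK : P ∈ K := by
    obtain ⟨S, -, hS, hP, -⟩ := h (m+1) (by linarith)
    refine ⟨(hS hP).1, le_of_forall_gt_imp_ge_of_dense fun l hl => ?_⟩
    obtain ⟨S, -, hS, hP, -⟩ := h l hl
    exact (hS hP).2
  have hZK : Z ∈ K := by
    obtain ⟨S, -, hS, -, hP⟩ := h (m+1) (by linarith)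
    refine ⟨(hS hP).1, le_of_forall_gt_imp_ge_of_dense fun l hl => ?_⟩
    obtain ⟨S, -, hS, -, hP⟩ := h l hl
    exact (hS hP).2
  have : CompactSpace K := isCompact_iff_compactSpace.1 hKc
  refine ⟨Subtype.val '' connectedComponent (⟨P, hPK⟩ : K),
    isPreconnected_connectedComponent.image _ continuous_subtype_val.continuousOn,
    isClosed_connectedComponent.isCompact.image continuous_subtype_val, ?_,
    ⟨_, mem_connectedComponent, rfl⟩, ⟨⟨Z, hZK⟩, ?_, rfl⟩⟩
  · rintro _ ⟨x, -, rfl⟩; exact x.2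
  by_contra hZ
  rw [connectedComponent_eq_iInter_isClopen] at hZ
  simp only [mem_iInter, not_forall] at hZ
  obtain ⟨⟨s, hs, hPs⟩, hZs⟩ := hZ
  have hA : IsCompact (Subtype.val '' s : Set E2) := hs.1.isCompact.image continuous_subtype_val
  have hB : IsCompact (Subtype.val '' sᶜ : Set E2) :=
    hs.compl.1.isCompact.image continuous_subtype_val
  have hd : Disjoint (Subtype.val '' s : Set E2) (Subtype.val '' sᶜ) :=
    (disjoint_image_iff Subtype.val_injective).2 disjoint_compl_right
  obtain ⟨U, V, hU, hV, hAU, hBV, hUV⟩ := SeparatedNhds.of_isCompact_isCompact hA hB hd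
  have hR : IsCompact (closedBall (0:E2) 1 \ (U ∪ V)) :=
    (isCompact_closedBall _ _).diff (hU.union hV)
  have hlow : ∃ l > m, ∀ x ∈ closedBall (0:E2) 1 \ (U ∪ V), l < f x := by
    rcases (closedBall (0:E2) 1 \ (U ∪ V)).eq_empty_or_nonempty with he | hne
    · exact ⟨m+1, by linarith, by simp [he]⟩
    · obtain ⟨x, hx, hmin⟩ := hR.exists_isMinOn hne hf.continuousOn
      have : m < f x := by
        by_contra hle
        have hxK : x ∈ K := ⟨hx.1, not_lt.1 hle⟩
        apply hx.2
        by_cases hxs : (⟨x, hxK⟩ : K) ∈ s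
        · exact Or.inl (hAU ⟨_, hxs, rfl⟩)
        · exact Or.inr (hBV ⟨_, hxs, rfl⟩)
      refine ⟨(m + f x)/2, by linarith, fun y hy => ?_⟩
      have := hmin hy
      simp only [mem_ofPred_eq] at this
      linarith
  obtain ⟨l, hl, hlf⟩ := hlow
  obtain ⟨S, hSp, hS, hP, hZ'⟩ := h l hl
  have hSU : S ⊆ U ∪ V := by
    intro x hx
    by_contra hn
    have := hlf x ⟨(hS hx).1, hn⟩
    linarith [(hS hx).2]
  obtain ⟨x, -, hxU, hxV⟩ := hSp U V hU hV hSU ⟨P, hP, hAU ⟨_, hPs, rfl⟩⟩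
    ⟨Z, hZ', hBV ⟨_, hZs, rfl⟩⟩
  exact disjoint_left.1 hUV hxU hxV

lemma aux_line (f : E2 → ℝ) (hf : ContDiff ℝ 1 f) (y v : E2) (b : ℝ) (hb : 0 < b)
    (h : ∀ r ∈ Ioo 0 b, fderiv ℝ f (y + r • v) v < 0) : f (y + b • v) < f y := by
  have hd : ∀ r : ℝ, HasDerivAt (fun r : ℝ => f (y + r • v)) (fderiv ℝ f (y + r • v) v) r := by
    intro r
    have h1 : HasDerivAt (fun r : ℝ => y + r • v) v r := by
      simpa using ((hasDerivAt_id r).smul_const v).const_add y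
    exact ((hf.differentiable one_ne_zero).differentiableAt.hasFDerivAt).comp_hasDerivAt r h1
  have hA : StrictAntiOn (fun r : ℝ => f (y + r • v)) (Icc 0 b) := by
    refine strictAntiOn_of_deriv_neg (convex_Icc 0 b)
      (fun r _ => (hd r).continuousAt.continuousWithinAt) fun r hr => ?_
    rw [interior_Icc] at hr
    rw [(hd r).deriv]
    exact h r hr
  simpa using hA (left_mem_Icc.2 hb.le) (right_mem_Icc.2 hb.le) hb

lemma aux_push (f : E2 → ℝ) (hf : ContDiff ℝ 1 f) (V : E2 → E2) (hV : Continuous V)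
    (C : Set E2) (hC : IsCompact C) (m : ℝ) (hle : ∀ x ∈ C, f x ≤ m)
    (hneg : ∀ x ∈ C, f x = m → fderiv ℝ f x (V x) < 0) :
    ∀ᶠ s in 𝓝[>] (0:ℝ), ∀ x ∈ C, f (x + s • V x) < m := by
  have hfc := hf.continuous
  have key : ∀ᶠ s in 𝓝 (0:ℝ), ∀ x ∈ C, x ∈ C → 0 < s → f (x + s • V x) < m := by
    refine hC.eventually_forall_of_forall_eventually fun x hx => ?_
    rcases (hle x hx).lt_or_eq with hlt | heq
    · have hc : Continuous fun z : ℝ × E2 => f (z.2 + z.1 • V z.2) := by fun_prop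
      have := hc.tendsto (0, x)
      simp only [zero_smul, add_zero] at this
      filter_upwards [this.eventually_lt_const hlt] with z hz _ _ using hz
    · have hc : Continuous fun z : ℝ × E2 => fderiv ℝ f (z.2 + z.1 • V z.2) (V z.2) :=
        ((hf.continuous_fderiv one_ne_zero).comp (by fun_prop)).clm_apply (by fun_prop)
      have := hc.tendsto (0, x)
      simp only [zero_smul, add_zero] at this
      have h1 := this.eventually_lt_const (hneg x hx heq)
      rw [Metric.eventually_nhds_iff] at h1
      obtain ⟨ε, hε, h1⟩ := h1
      rw [Metric.eventually_nhds_iff]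
      refine ⟨ε, hε, fun z hz hzC hs => ?_⟩
      refine (aux_line f hf z.2 (V z.2) z.1 hs fun r hr => ?_).trans_le (hle _ hzC)
      refine h1 (y := (r, z.2)) (lt_of_le_of_lt ?_ hz)
      rw [Prod.dist_eq, Prod.dist_eq]
      refine max_le_max ?_ le_rfl
      simp only [Real.dist_eq, sub_zero]
      rw [abs_of_pos hr.1, abs_of_pos hs]
      exact hr.2.le
  exact (key.filter_mono nhdsWithin_le_nhds).and self_mem_nhdsWithin |>.mono
    fun s hs x hx => hs.1 x hx hx hs.2

lemma aux_core (f : E2 → ℝ) (hf : ContDiff ℝ 2 f) (P Z : E2) (c : ℝ) (hPZ : P ≠ Z)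
    (hconn : ∃ l < c, ∃ S : Set E2, IsPreconnected S ∧
      S ⊆ {x | x ∈ closedBall (0:E2) 1 ∧ f x ≤ l} ∧ P ∈ S ∧ Z ∈ S)
    (hint : ∀ x ∈ ball (0:E2) 1, f P ≤ f x → f x < c → gradient f x ≠ 0)
    (hsph : ∀ x ∈ sphere (0:E2) 1, gradient f x ≠ 0)
    (hiso : ∀ x ∈ sphere (0:E2) 1, f P ≤ f x → f x < c → ⟪gradient f x, x⟫ = -‖gradient f x‖ →
      ∀ᶠ y in 𝓝 x, y ∈ closedBall (0:E2) 1 → f y ≤ f x → y = x)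
    (hP : ∀ᶠ y in 𝓝 P, y ∈ closedBall (0:E2) 1 → f y ≤ f P → y = P)
    (hZ : f P ≤ f Z → ∀ᶠ y in 𝓝 Z, y ∈ closedBall (0:E2) 1 → f y ≤ f Z → y = Z) : False := by
  set Lv : Set ℝ := {l | ∃ S : Set E2, IsPreconnected S ∧
      S ⊆ {x | x ∈ closedBall (0:E2) 1 ∧ f x ≤ l} ∧ P ∈ S ∧ Z ∈ S} with hLv
  obtain ⟨l₀, hl₀, hl₀m⟩ := hconn
  have hbdd : BddBelow Lv := ⟨f P, fun l ⟨S, _, hS, hPS, _⟩ => (hS hPS).2⟩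
  set m := sInf Lv with hm
  have hmc : m < c := lt_of_le_of_lt (csInf_le hbdd hl₀m) hl₀
  obtain ⟨C, hCp, hCc, hCK, hPC, hZC⟩ := aux_conn_limit f hf.continuous m P Z (by
    intro l hl
    obtain ⟨l', hl', hll⟩ := exists_lt_of_csInf_lt ⟨l₀, hl₀m⟩ hl
    obtain ⟨S, h1, h2, h3, h4⟩ := hl'
    exact ⟨S, h1, fun x hx => ⟨(h2 hx).1, (h2 hx).2.trans hll.le⟩, h3, h4⟩)
  have hPm : f P ≤ m := (hCK hPC).2
  -- isolated points at level m do not belong to C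
  have hnoiso : ∀ x ∈ C, f x = m →
      ¬ ∀ᶠ y in 𝓝 x, y ∈ closedBall (0:E2) 1 → f y ≤ f x → y = x := by
    intro x hx hxm hev
    rw [Metric.eventually_nhds_iff] at hev
    obtain ⟨ε, hε, hev⟩ := hev
    have hw : ∃ w ∈ C, w ≠ x := by
      by_cases h : P = x
      · exact ⟨Z, hZC, fun hh => hPZ (h.trans hh.symm)⟩
      · exact ⟨P, hPC, h⟩
    obtain ⟨w, hwC, hwx⟩ := hw
    have hCx : ∀ y ∈ C, dist y x < ε → y = x := fun y hy hd =>
      hev hd (hCK hy).1 (by rw [hxm]; exact (hCK hy).2)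
    obtain ⟨y, hyC, hy1, hy2⟩ := hCp (ball x ε) {x}ᶜ isOpen_ball isOpen_compl_singleton
      (by
        intro y hy
        by_cases h : y = x
        · left; simp [h, hε]
        · right; exact h)
      ⟨x, hx, mem_ball_self hε⟩ ⟨w, hwC, hwx⟩
    exact hy2 (hCx y hyC hy1)
  have hPlt : f P < m := hPm.lt_of_ne fun h => hnoiso P hPC h hP
  have hZlt : f Z < m := (hCK hZC).2.lt_of_ne fun h => hnoiso Z hZC h (hZ (by rw [h]; exact hPm))
  have hf1 : ContDiff ℝ 1 f := hf.of_le (by norm_num)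
  have hgc : Continuous (gradient f) :=
    (InnerProductSpace.toDual ℝ E2).symm.continuous.comp (hf1.continuous_fderiv one_ne_zero)
  set V : E2 → E2 := fun x => -(gradient f x + (‖gradient f x‖ + (m - f x)) • x) with hVdef
  have hfc := hf.continuous
  have hVc : Continuous V := by fun_prop
  -- strict Cauchy-Schwarz at level m
  have hCS : ∀ x ∈ C, f x = m → 0 < ‖gradient f x‖ ∧ 0 < ‖gradient f x‖ + ⟪gradient f x, x⟫ := by
    intro x hx hxm
    have hx1 := (hCK hx).1
    rw [mem_closedBall_zero_iff] at hx1
    have habs : -(‖gradient f x‖ * ‖x‖) ≤ ⟪gradient f x, x⟫ :=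
      (abs_le.1 (abs_real_inner_le_norm (gradient f x) x)).1
    rcases hx1.lt_or_eq with hlt | heq
    · have h0 : 0 < ‖gradient f x‖ := norm_pos_iff.2 (hint x (by simpa using hlt)
        (by rw [hxm]; exact hPm) (by rw [hxm]; exact hmc))
      exact ⟨h0, by nlinarith⟩
    · have hxs : x ∈ sphere (0:E2) 1 := by simpa using heq
      have h0 : 0 < ‖gradient f x‖ := norm_pos_iff.2 (hsph x hxs)
      refine ⟨h0, ?_⟩
      rw [heq, mul_one] at habs
      have : ⟪gradient f x, x⟫ ≠ -‖gradient f x‖ := fun h => hnoiso x hx hxm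
        (hiso x hxs (by rw [hxm]; exact hPm) (by rw [hxm]; exact hmc) h)
      have := lt_of_le_of_ne habs this.symm
      linarith
  have hpush1 := aux_push f hf1 V hVc C hCc m (fun x hx => (hCK hx).2) (by
    intro x hx hxm
    obtain ⟨h1, h2⟩ := hCS x hx hxm
    rw [← inner_gradient_left]
    simp only [hVdef, hxm, sub_self, add_zero, inner_neg_right, inner_add_right,
      real_inner_smul_right, real_inner_self_eq_norm_sq]
    nlinarith)
  have hpush2 := aux_push (fun x => ‖x‖ ^ 2) (contDiff_norm_sq ℝ) V hVc C hCc 1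
    (fun x hx => by
      have := (hCK hx).1
      rw [mem_closedBall_zero_iff] at this
      nlinarith [norm_nonneg x]) (by
    intro x hx hx1
    have hxn : ‖x‖ ^ 2 = 1 := hx1
    have hfd : fderiv ℝ (fun x : E2 => ‖x‖ ^ 2) x (V x) = 2 * ⟪x, V x⟫ := by
      rw [fderiv_norm_sq_apply]; simp
    rw [hfd]
    simp only [hVdef, inner_neg_right, inner_add_right, real_inner_smul_right,
      real_inner_self_eq_norm_sq, hxn]
    rw [real_inner_comm]
    rcases (hCK hx).2.lt_or_eq with hlt | heq
    · have hn : ‖x‖ = 1 := by nlinarith [norm_nonneg x]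
      have habs : -(‖gradient f x‖ * ‖x‖) ≤ ⟪gradient f x, x⟫ :=
        (abs_le.1 (abs_real_inner_le_norm (gradient f x) x)).1
      rw [hn, mul_one] at habs
      linarith
    · have := (hCS x hx heq).2
      linarith)
  have hev := hpush1.and hpush2
  rw [eventually_nhdsWithin_iff, Metric.eventually_nhds_iff] at hev
  obtain ⟨ε, hε, hev⟩ := hev
  have hall : ∀ s, 0 ≤ s → s ≤ ε/2 → ∀ x ∈ C, (0 < s ∨ f x < m) →
      x + s • V x ∈ {x | x ∈ closedBall (0:E2) 1 ∧ f x < m} := by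
    intro s hs0 hs x hx hor
    rcases hs0.eq_or_lt with h0 | h0
    · subst h0
      simp only [lt_irrefl, false_or] at hor
      simpa using ⟨by simpa using (hCK hx).1, hor⟩
    · obtain ⟨h1, h2⟩ := hev (y := s) (by rw [Real.dist_eq, sub_zero, abs_of_pos h0]; linarith) h0
      refine ⟨?_, h1 x hx⟩
      have := h2 x hx
      rw [mem_closedBall_zero_iff]
      nlinarith [norm_nonneg (x + s • V x)]
  set F : Set E2 := (fun x => x + (ε/2) • V x) '' C
  set SP : Set E2 := (fun s : ℝ => P + s • V P) '' Icc 0 (ε/2)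
  set SZ : Set E2 := (fun s : ℝ => Z + s • V Z) '' Icc 0 (ε/2)
  have hFp : IsPreconnected F := hCp.image _ (by fun_prop)
  have hSPp : IsPreconnected SP := isPreconnected_Icc.image _ (by fun_prop)
  have hSZp : IsPreconnected SZ := isPreconnected_Icc.image _ (by fun_prop)
  have hT : IsPreconnected (SP ∪ F ∪ SZ) := by
    refine IsPreconnected.union (Z + (ε/2) • V Z) (Or.inr ⟨Z, hZC, rfl⟩)
      ⟨ε/2, ⟨by linarith, le_rfl⟩, rfl⟩ ?_ hSZp
    exact IsPreconnected.union (P + (ε/2) • V P) ⟨ε/2, ⟨by linarith, le_rfl⟩, rfl⟩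
      ⟨P, hPC, rfl⟩ hSPp hFp
  have hTc : IsCompact (SP ∪ F ∪ SZ) :=
    ((isCompact_Icc.image (by fun_prop)).union (hCc.image (by fun_prop))).union
      (isCompact_Icc.image (by fun_prop))
  have hPT : P ∈ SP ∪ F ∪ SZ := Or.inl (Or.inl ⟨0, ⟨le_rfl, by linarith⟩, by simp⟩)
  have hZT : Z ∈ SP ∪ F ∪ SZ := Or.inr ⟨0, ⟨le_rfl, by linarith⟩, by simp⟩
  have hTm : SP ∪ F ∪ SZ ⊆ {x | x ∈ closedBall (0:E2) 1 ∧ f x < m} := by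
    rintro _ ((⟨s, hs, rfl⟩ | ⟨x, hx, rfl⟩) | ⟨s, hs, rfl⟩)
    · exact hall s hs.1 hs.2 P hPC (Or.inr hPlt)
    · exact hall _ (by linarith) le_rfl x hx (Or.inl (by linarith))
    · exact hall s hs.1 hs.2 Z hZC (Or.inr hZlt)
  obtain ⟨x, hx, hmax⟩ := hTc.exists_isMaxOn ⟨P, hPT⟩ hf.continuous.continuousOn
  have : f x ∈ Lv := ⟨_, hT, fun y hy => ⟨(hTm hy).1, hmax hy⟩, hPT, hZT⟩
  exact absurd (csInf_le hbdd this) (not_le.2 (hTm hx).2)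

lemma sphPt_zero (t : ℝ) : sphPt t 0 = Real.cos t := by simp [sphPt]

lemma sphPt_one (t : ℝ) : sphPt t 1 = Real.sin t := by simp [sphPt]

lemma sphPt_norm (t : ℝ) : ‖sphPt t‖ = 1 := by
  rw [EuclideanSpace.norm_eq]
  simp [sphPt_zero, sphPt_one]

lemma sphPt_hasDerivAt (t : ℝ) : HasDerivAt sphPt (sphPt (t + Real.pi / 2)) t := by
  unfold sphPt
  refine ((EuclideanSpace.equiv (Fin 2) ℝ).symm : (Fin 2 → ℝ) →L[ℝ] E2).hasFDerivAt.comp_hasDerivAt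
    t (f := fun t => ![Real.cos t, Real.sin t]) ?_
  rw [hasDerivAt_pi]
  intro i
  fin_cases i
  · simpa [Real.cos_add_pi_div_two] using Real.hasDerivAt_cos t
  · simpa [Real.sin_add_pi_div_two] using Real.hasDerivAt_sin t

lemma sphPt_continuous : Continuous sphPt :=
  continuous_iff_continuousAt.2 fun t => (sphPt_hasDerivAt t).continuousAt

lemma sphPt_periodic (t : ℝ) : sphPt (t + 2 * Real.pi) = sphPt t := by
  simp [sphPt]

lemma sphPt_inner (s t : ℝ) : ⟪sphPt s, sphPt t⟫ = Real.cos (s - t) := by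
  rw [PiLp.inner_apply]
  simp [sphPt_zero, sphPt_one, Real.cos_sub]
  ring

/-- local polar coordinates -/
lemma sphPt_polar (θ : ℝ) (s : Set ℝ) (hs : s ∈ 𝓝 θ) :
    ∀ᶠ y in 𝓝 (sphPt θ), ∃ t ∈ s, y = ‖y‖ • sphPt t := by
  set σ : E2 → ℝ := fun y => (-(y 0) * Real.sin θ + y 1 * Real.cos θ) / ‖y‖ with hσ
  have hn0 : ‖sphPt θ‖ ≠ 0 := by rw [sphPt_norm]; exact one_ne_zero
  have hσc : ContinuousAt (fun y => θ + Real.arcsin (σ y)) (sphPt θ) := by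
    have : ContinuousAt σ (sphPt θ) := by
      apply ContinuousAt.div _ continuous_norm.continuousAt hn0
      fun_prop
    exact continuousAt_const.add (Real.continuous_arcsin.continuousAt.comp this)
  have hσ0 : θ + Real.arcsin (σ (sphPt θ)) = θ := by
    have : σ (sphPt θ) = 0 := by simp [hσ, sphPt_zero, sphPt_one]; left; ring
    simp [this]
  have h1 : ∀ᶠ y in 𝓝 (sphPt θ), θ + Real.arcsin (σ y) ∈ s := hσc (by simpa only [hσ0] using hs)
  have hκ : ∀ᶠ y : E2 in 𝓝 (sphPt θ), 0 < y 0 * Real.cos θ + y 1 * Real.sin θ := by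
    have hc : Continuous fun y : E2 => y 0 * Real.cos θ + y 1 * Real.sin θ := by fun_prop
    refine hc.continuousAt.eventually_const_lt ?_
    simp only [sphPt_zero, sphPt_one]
    nlinarith [Real.sin_sq_add_cos_sq θ]
  filter_upwards [h1, hκ] with y hy1 hy2
  refine ⟨_, hy1, ?_⟩
  have hy0 : 0 < ‖y‖ := by
    rw [norm_pos_iff]
    rintro rfl
    simp at hy2
  have hny : ‖y‖ ^ 2 = y 0 ^ 2 + y 1 ^ 2 := by
    rw [EuclideanSpace.norm_sq_eq]
    simp [Fin.sum_univ_two]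
  set κ := (y 0 * Real.cos θ + y 1 * Real.sin θ) / ‖y‖ with hκd
  have hκ0 : 0 < κ := div_pos hy2 hy0
  have hsc := Real.sin_sq_add_cos_sq θ
  have hsum : κ ^ 2 + σ y ^ 2 = 1 := by
    rw [hκd, hσ]
    field_simp
    rw [hny]
    linear_combination (y 0 ^ 2 + y 1 ^ 2) * hsc
  have hsin : Real.sin (Real.arcsin (σ y)) = σ y :=
    Real.sin_arcsin (by nlinarith) (by nlinarith)
  have hcos : Real.cos (Real.arcsin (σ y)) = κ := by
    rw [Real.cos_arcsin, show 1 - σ y ^ 2 = κ ^ 2 by linarith, Real.sqrt_sq hκ0.le]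
  have e1 : ‖y‖ * κ = y 0 * Real.cos θ + y 1 * Real.sin θ := by rw [hκd]; field_simp
  have e2 : ‖y‖ * σ y = -(y 0) * Real.sin θ + y 1 * Real.cos θ := by rw [hσ]; field_simp
  ext i
  fin_cases i
  · show y 0 = ‖y‖ * sphPt _ 0
    rw [sphPt_zero, Real.cos_add, hsin, hcos]
    linear_combination (-Real.cos θ) * e1 + Real.sin θ * e2 - y 0 * hsc
  · show y 1 = ‖y‖ * sphPt _ 1
    rw [sphPt_one, Real.sin_add, hsin, hcos]
    linear_combination (-Real.sin θ) * e1 - Real.cos θ * e2 - y 1 * hsc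

lemma aux_strictmin (g : ℝ → ℝ) (hg : ContDiff ℝ 2 g) (θ : ℝ) (h1 : deriv g θ = 0)
    (h2 : 0 < deriv (deriv g) θ) : ∀ᶠ t in 𝓝 θ, t ≠ θ → g θ < g t := by
  have hg' : ContDiff ℝ 1 (deriv g) := ((contDiff_succ_iff_deriv (n := 1)).1 hg).2.2
  have hc2 : Continuous (deriv (deriv g)) := hg'.continuous_deriv le_rfl
  have hev := hc2.continuousAt.eventually_const_lt h2
  rw [Metric.eventually_nhds_iff] at hev ⊢
  obtain ⟨ε, hε, hev⟩ := hev
  have hmono : StrictMonoOn (deriv g) (Ioo (θ - ε) (θ + ε)) := by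
    refine strictMonoOn_of_deriv_pos (convex_Ioo _ _) hg'.continuous.continuousOn fun t ht => ?_
    rw [interior_Ioo] at ht
    exact hev (by rw [Real.dist_eq, abs_lt]; constructor <;> linarith [ht.1, ht.2])
  refine ⟨ε, hε, fun t ht htne => ?_⟩
  rw [Real.dist_eq, abs_lt] at ht
  rcases lt_or_gt_of_ne htne with h | h
  · have : StrictAntiOn g (Icc t θ) := by
      refine strictAntiOn_of_deriv_neg (convex_Icc _ _) hg.continuous.continuousOn fun u hu => ?_
      rw [interior_Icc] at hu
      rw [← h1]
      exact hmono ⟨by linarith [hu.1], by linarith [hu.2]⟩ ⟨by linarith, by linarith⟩ hu.2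
    exact this (left_mem_Icc.2 h.le) (right_mem_Icc.2 h.le) h
  · have : StrictMonoOn g (Icc θ t) := by
      refine strictMonoOn_of_deriv_pos (convex_Icc _ _) hg.continuous.continuousOn fun u hu => ?_
      rw [interior_Icc] at hu
      rw [← h1]
      exact hmono ⟨by linarith, by linarith⟩ ⟨by linarith [hu.1], by linarith [hu.2]⟩ hu.1
    exact this (left_mem_Icc.2 h.le) (right_mem_Icc.2 h.le) h

lemma aux_mono (g : ℝ → ℝ) (hg : ContDiff ℝ 2 g) (α β : ℝ)
    (hne : ∀ t ∈ Ioo α β, deriv g t ≠ 0) :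
    StrictMonoOn g (Icc α β) ∨ StrictAntiOn g (Icc α β) := by
  have hc : Continuous (deriv g) := hg.continuous_deriv (by norm_num)
  by_cases hp : ∀ t ∈ Ioo α β, 0 < deriv g t
  · left
    refine strictMonoOn_of_deriv_pos (convex_Icc _ _) hg.continuous.continuousOn fun u hu => ?_
    rw [interior_Icc] at hu
    exact hp u hu
  · right
    push Not at hp
    obtain ⟨t, ht, hle⟩ := hp
    refine strictAntiOn_of_deriv_neg (convex_Icc _ _) hg.continuous.continuousOn fun u hu => ?_
    rw [interior_Icc] at hu
    by_contra hu0
    obtain ⟨w, hw, hw0⟩ := isPreconnected_Ioo.intermediate_value ht hu hc.continuousOn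
      ⟨hle, not_lt.1 hu0⟩
    exact hne w hw hw0

lemma aux_freq (g : ℝ → ℝ) (α β : ℝ) (hab : α < β) (p : ℝ) (hp : p ∈ Icc α β)
    (h : ∀ᶠ t in 𝓝 p, t ≠ p → g p < g t) : ∃ t ∈ Icc α β, t ≠ p ∧ g p < g t ∧
      (p = α → α < t) ∧ (p = β → t < β) := by
  rw [Metric.eventually_nhds_iff] at h
  obtain ⟨ε, hε, h⟩ := h
  rcases hp.2.lt_or_eq with hlt | heq
  · have hm : 0 < min (ε/2) (β - p) := lt_min (by linarith) (by linarith)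
    have h1 := min_le_left (ε/2) (β - p)
    have h2 := min_le_right (ε/2) (β - p)
    refine ⟨p + min (ε/2) (β - p), ⟨by linarith [hp.1], by linarith⟩, by linarith, ?_,
      by intro h; linarith, by intro h; linarith⟩
    refine h ?_ (by linarith)
    rw [Real.dist_eq, add_sub_cancel_left, abs_of_pos hm]
    linarith
  · have hm : 0 < min (ε/2) (p - α) := lt_min (by linarith) (by linarith)
    have h1 := min_le_left (ε/2) (p - α)
    have h2 := min_le_right (ε/2) (p - α)
    refine ⟨p - min (ε/2) (p - α), ⟨by linarith [hp.1], by linarith⟩, by linarith, ?_,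
      by intro h; linarith, by intro h; linarith⟩
    refine h ?_ (by linarith)
    rw [Real.dist_eq, sub_sub_cancel_left, abs_neg, abs_of_pos hm]
    linarith

lemma aux_neg_deriv2 (g : ℝ → ℝ) : deriv (deriv (fun t => - g t)) = fun t => - deriv (deriv g) t := by
  have h : ∀ g : ℝ → ℝ, deriv (fun t => - g t) = fun t => - deriv g t := by
    intro g; ext t; exact deriv.fun_neg
  rw [h, h]

/-- around a maximum: neighbours are minima, and g is strictly below on both sides -/
lemma aux_max_right (g : ℝ → ℝ) (hg : ContDiff ℝ 2 g) (α β : ℝ) (hab : α < β)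
    (hne : ∀ t ∈ Ioo α β, deriv g t ≠ 0) (h1 : deriv g α = 0) (h2 : deriv (deriv g) α < 0)
    (h3 : deriv g β = 0) (h4 : deriv (deriv g) β ≠ 0) :
    0 < deriv (deriv g) β ∧ ∀ t ∈ Ioc α β, g t < g α := by
  have hng : ContDiff ℝ 2 (fun t => - g t) := hg.neg
  have hA := aux_strictmin (fun t => - g t) hng α (by rw [deriv.fun_neg, h1, neg_zero])
    (by rw [aux_neg_deriv2]; linarith)
  have hanti : StrictAntiOn g (Icc α β) := by
    rcases aux_mono g hg α β hne with h | h
    · obtain ⟨t, ht, hne, hlt, -⟩ := aux_freq (fun t => - g t) α β hab α (left_mem_Icc.2 hab.le) hA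
      have := h (left_mem_Icc.2 hab.le) ht (lt_of_le_of_ne ht.1 hne.symm)
      linarith
    · exact h
  refine ⟨?_, fun t ht => hanti (left_mem_Icc.2 hab.le) ⟨ht.1.le, ht.2⟩ ht.1⟩
  rcases lt_or_gt_of_ne h4 with h | h
  · exfalso
    have hB := aux_strictmin (fun t => - g t) hng β (by rw [deriv.fun_neg, h3, neg_zero])
      (by rw [aux_neg_deriv2]; linarith)
    obtain ⟨t, ht, hne, hlt, -⟩ := aux_freq (fun t => - g t) α β hab β (right_mem_Icc.2 hab.le) hB
    have := hanti ht (right_mem_Icc.2 hab.le) (lt_of_le_of_ne ht.2 hne)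
    linarith
  · exact h

lemma aux_max_left (g : ℝ → ℝ) (hg : ContDiff ℝ 2 g) (α β : ℝ) (hab : α < β)
    (hne : ∀ t ∈ Ioo α β, deriv g t ≠ 0) (h1 : deriv g β = 0) (h2 : deriv (deriv g) β < 0)
    (h3 : deriv g α = 0) (h4 : deriv (deriv g) α ≠ 0) :
    0 < deriv (deriv g) α ∧ ∀ t ∈ Ico α β, g t < g β := by
  have hng : ContDiff ℝ 2 (fun t => - g t) := hg.neg
  have hA := aux_strictmin (fun t => - g t) hng β (by rw [deriv.fun_neg, h1, neg_zero])
    (by rw [aux_neg_deriv2]; linarith)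
  have hmono : StrictMonoOn g (Icc α β) := by
    rcases aux_mono g hg α β hne with h | h
    · exact h
    · obtain ⟨t, ht, hne, hlt, -⟩ := aux_freq (fun t => - g t) α β hab β (right_mem_Icc.2 hab.le) hA
      have := h ht (right_mem_Icc.2 hab.le) (lt_of_le_of_ne ht.2 hne)
      linarith
  refine ⟨?_, fun t ht => hmono ⟨ht.1, ht.2.le⟩ (right_mem_Icc.2 hab.le) ht.2⟩
  rcases lt_or_gt_of_ne h4 with h | h
  · exfalso
    have hB := aux_strictmin (fun t => - g t) hng α (by rw [deriv.fun_neg, h3, neg_zero])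
      (by rw [aux_neg_deriv2]; linarith)
    obtain ⟨t, ht, hne, hlt, -⟩ := aux_freq (fun t => - g t) α β hab α (left_mem_Icc.2 hab.le) hB
    have := hmono (left_mem_Icc.2 hab.le) ht (lt_of_le_of_ne ht.1 hne.symm)
    linarith
  · exact h

lemma aux_isolated (f : E2 → ℝ) (hf : ContDiff ℝ 2 f) (g : ℝ → ℝ) (hg : ContDiff ℝ 2 g)
    (hfg : ∀ t, f (sphPt t) = g t) (θ : ℝ) (h1 : deriv g θ = 0) (h2 : 0 < deriv (deriv g) θ)
    (hr : ⟪gradient f (sphPt θ), sphPt θ⟫ < 0) :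
    ∀ᶠ y in 𝓝 (sphPt θ), y ∈ closedBall (0:E2) 1 → f y ≤ f (sphPt θ) → y = sphPt θ := by
  have hf1 : ContDiff ℝ 1 f := hf.of_le (by norm_num)
  rw [inner_gradient_left] at hr
  have hc : Continuous fun z : ℝ × ℝ => fderiv ℝ f (z.1 • sphPt z.2) (sphPt z.2) :=
    ((hf1.continuous_fderiv one_ne_zero).comp
      (continuous_fst.smul (sphPt_continuous.comp continuous_snd))).clm_apply
      (sphPt_continuous.comp continuous_snd)
  have hev : ∀ᶠ z in 𝓝 ((1:ℝ), θ), fderiv ℝ f (z.1 • sphPt z.2) (sphPt z.2) < 0 :=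
    hc.continuousAt.eventually_lt_const (by simpa using hr)
  have hmin := aux_strictmin g hg θ h1 h2
  rw [Metric.eventually_nhds_iff] at hev
  obtain ⟨ε, hε, hev⟩ := hev
  have hnorm : ∀ᶠ y in 𝓝 (sphPt θ), 1 - ε < ‖y‖ :=
    continuous_norm.continuousAt.eventually_const_lt (by simp only [sphPt_norm]; linarith)
  filter_upwards [hnorm, sphPt_polar θ _ (hmin.and (Metric.ball_mem_nhds θ hε))] with y hy hpol hy1 hle
  obtain ⟨t, ⟨htmin, htε⟩, hyt⟩ := hpol
  rw [mem_closedBall_zero_iff] at hy1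
  have hgt : g θ ≤ g t := by
    by_cases h : t = θ
    · rw [h]
    · exact (htmin h).le
  rcases hy1.lt_or_eq with hlt | heq
  · exfalso
    have := aux_line f hf1 y (sphPt t) (1 - ‖y‖) (by linarith) (by
      intro r hr
      have e : y + r • sphPt t = (‖y‖ + r) • sphPt t := by
        rw [add_smul, ← hyt]
      rw [e]
      refine hev (y := (‖y‖ + r, t)) ?_
      rw [Prod.dist_eq, max_lt_iff]
      refine ⟨?_, htε⟩
      rw [Real.dist_eq, abs_lt]
      constructor <;> linarith [hr.1, hr.2])
    have e : y + (1 - ‖y‖) • sphPt t = sphPt t := by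
      nth_rewrite 1 [hyt]
      rw [← add_smul]; simp
    rw [e, hfg] at this
    rw [hfg] at hle
    linarith
  · rw [heq, one_smul] at hyt
    by_cases h : t = θ
    · rw [hyt, h]
    · have := htmin h
      rw [hyt, hfg, hfg] at hle
      linarith

lemma aux_detour (f : E2 → ℝ) (hf : ContDiff ℝ 2 f) (g : ℝ → ℝ)
    (hfg : ∀ t, f (sphPt t) = g t) (α β γ : ℝ) (hab : α < β) (hbc : β < γ)
    (h1 : ∀ t ∈ Ico α β, g t < g β) (h2 : ∀ t ∈ Ioc β γ, g t < g β)
    (hr : 0 < ⟪gradient f (sphPt β), sphPt β⟫) :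
    ∃ l < g β, ∃ S : Set E2, IsPreconnected S ∧
      S ⊆ {x | x ∈ closedBall (0:E2) 1 ∧ f x ≤ l} ∧ sphPt α ∈ S ∧ sphPt γ ∈ S := by
  have hf1 : ContDiff ℝ 1 f := hf.of_le (by norm_num)
  rw [inner_gradient_left] at hr
  have hc : Continuous fun z : ℝ × ℝ => fderiv ℝ f (z.1 • sphPt z.2) (sphPt z.2) :=
    ((hf1.continuous_fderiv one_ne_zero).comp
      (continuous_fst.smul (sphPt_continuous.comp continuous_snd))).clm_apply
      (sphPt_continuous.comp continuous_snd)
  have hev : ∀ᶠ z in 𝓝 ((1:ℝ), β), 0 < fderiv ℝ f (z.1 • sphPt z.2) (sphPt z.2) :=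
    hc.continuousAt.eventually_const_lt (by simpa using hr)
  rw [Metric.eventually_nhds_iff] at hev
  obtain ⟨ε, hε, hev⟩ := hev
  obtain ⟨δ, hδ0, hδ⟩ : ∃ δ > 0, δ ≤ ε ∧ δ ≤ 1 ∧ δ ≤ β - α ∧ δ ≤ γ - β := by
    refine ⟨min (min ε 1) (min (β - α) (γ - β)), ?_, ?_, ?_, ?_, ?_⟩
    · exact lt_min (lt_min hε one_pos) (lt_min (by linarith) (by linarith))
    · exact (min_le_left _ _).trans (min_le_left _ _)
    · exact (min_le_left _ _).trans (min_le_right _ _)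
    · exact (min_le_right _ _).trans (min_le_left _ _)
    · exact (min_le_right _ _).trans (min_le_right _ _)
  obtain ⟨hδε, hδ1, hδα, hδγ⟩ := hδ
  set ρ : ℝ → ℝ := fun t => max 0 (δ - |t - β|) with hρ
  set w : ℝ → E2 := fun t => (1 - ρ t) • sphPt t with hw
  have hwc : Continuous w := by
    have := sphPt_continuous
    fun_prop
  have hρ0 : ∀ t, 0 ≤ ρ t := fun t => le_max_left _ _
  have hρ1 : ∀ t, ρ t ≤ 1 := fun t => max_le zero_le_one (by linarith [abs_nonneg (t - β)])
  have hwball : ∀ t, w t ∈ closedBall (0:E2) 1 := by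
    intro t
    rw [mem_closedBall_zero_iff, hw]
    simp only [norm_smul, sphPt_norm, mul_one, Real.norm_eq_abs]
    rw [abs_le]
    constructor <;> linarith [hρ0 t, hρ1 t]
  have hle : ∀ t ∈ Icc α γ, g t ≤ g β := by
    intro t ht
    rcases lt_trichotomy t β with h | h | h
    · exact (h1 t ⟨ht.1, h⟩).le
    · rw [h]
    · exact (h2 t ⟨h, ht.2⟩).le
  have hlt : ∀ t ∈ Icc α γ, f (w t) < g β := by
    intro t ht
    rcases (hρ0 t).eq_or_lt with h0 | hpos
    · have e : w t = sphPt t := by simp [hw, ← h0]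
      rw [e, hfg]
      rcases lt_trichotomy t β with h | h | h
      · exact h1 t ⟨ht.1, h⟩
      · exfalso
        subst h
        have : δ ≤ ρ t := by simp [hρ]
        linarith
      · exact h2 t ⟨h, ht.2⟩
    · have hρt : ρ t = δ - |t - β| := by
        rcases le_total (δ - |t - β|) 0 with h | h
        · exact absurd (max_eq_left h) hpos.ne'
        · exact max_eq_right h
      have := aux_line f hf1 (sphPt t) (-sphPt t) (ρ t) hpos (by
        intro r hr
        have e : sphPt t + r • (-sphPt t) = (1 - r) • sphPt t := by
          rw [sub_smul, one_smul, smul_neg, sub_eq_add_neg]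
        rw [e, map_neg, neg_lt_zero]
        refine hev (y := (1 - r, t)) ?_
        rw [Prod.dist_eq, max_lt_iff, Real.dist_eq, Real.dist_eq]
        refine ⟨?_, by linarith⟩
        rw [abs_lt]
        constructor <;> linarith [hr.1, hr.2, abs_nonneg (t - β)])
      have e : sphPt t + ρ t • (-sphPt t) = w t := by
        rw [hw]; simp only
        rw [sub_smul, one_smul, smul_neg, sub_eq_add_neg]
      rw [e, hfg] at this
      exact this.trans_le (hle t ht)
  have hαγ : α ≤ γ := by linarith
  obtain ⟨u, hu, hmax⟩ := isCompact_Icc.exists_isMaxOn (nonempty_Icc.2 hαγ)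
    (hf.continuous.comp hwc).continuousOn
  refine ⟨f (w u), hlt u hu, w '' Icc α γ, isPreconnected_Icc.image _ hwc.continuousOn, ?_, ?_, ?_⟩
  · rintro _ ⟨t, ht, rfl⟩
    exact ⟨hwball t, hmax ht⟩
  · refine ⟨α, left_mem_Icc.2 hαγ, ?_⟩
    have : ρ α = 0 := max_eq_left (by rw [abs_sub_comm, abs_of_pos (by linarith : 0 < β - α)]; linarith)
    simp [hw, this]
  · refine ⟨γ, right_mem_Icc.2 hαγ, ?_⟩
    have : ρ γ = 0 := max_eq_left (by rw [abs_of_pos (by linarith : 0 < γ - β)]; linarith)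
    simp [hw, this]

lemma aux_two_le : (2 : WithTop ℕ∞) ≤ ((⊤ : ℕ∞) : WithTop ℕ∞) :=
  WithTop.coe_le_coe.2 (le_top : (2 : ℕ∞) ≤ ⊤)

lemma aux_per_deriv (g : ℝ → ℝ) (c : ℝ) (h : Function.Periodic g c) :
    Function.Periodic (deriv g) c := by
  intro t
  rw [← deriv_comp_add_const]
  congr 1
  ext x
  exact h x

lemma aux_gap {n : ℕ} (a : Ribbon n) (i : Fin n) : ∃ β : ℝ, a.θ i < β ∧
    (∃ e : ℕ, β = a.θ (a.next i) + e * (2 * Real.pi)) ∧ ∀ t ∈ Ioo (a.θ i) β, deriv a.g t ≠ 0 := by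
  have hpi := Real.pi_pos
  by_cases h : (i : ℕ) + 1 < n
  · have hnext : ((a.next i : Fin n) : ℕ) = i + 1 := Nat.mod_eq_of_lt h
    refine ⟨a.θ (a.next i), a.theta_mono (by rw [Fin.lt_def, hnext]; omega), ⟨0, by simp⟩, ?_⟩
    intro t ht h0
    obtain ⟨j, rfl⟩ := a.crit_only t ⟨(a.theta_mem i).1.trans ht.1.le,
      ht.2.trans (a.theta_mem _).2⟩ h0
    have h1 := a.theta_mono.lt_iff_lt.1 ht.1
    have h2 := a.theta_mono.lt_iff_lt.1 ht.2
    rw [Fin.lt_def] at h1 h2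
    omega
  · have hi : (i : ℕ) + 1 = n := by omega
    have hnext : ((a.next i : Fin n) : ℕ) = 0 := by
      show ((i : ℕ) + 1) % n = 0
      rw [hi, Nat.mod_self]
    refine ⟨a.θ (a.next i) + 2 * Real.pi, ?_, ⟨1, by simp⟩, ?_⟩
    · linarith [(a.theta_mem i).2, (a.theta_mem (a.next i)).1]
    intro t ht h0
    by_cases htp : t < 2 * Real.pi
    · obtain ⟨j, rfl⟩ := a.crit_only t ⟨(a.theta_mem i).1.trans ht.1.le, htp⟩ h0
      have h1 := a.theta_mono.lt_iff_lt.1 ht.1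
      rw [Fin.lt_def] at h1
      omega
    · have hd : deriv a.g (t - 2 * Real.pi) = 0 := by
        rw [← aux_per_deriv a.g _ a.periodic_g, sub_add_cancel]; exact h0
      obtain ⟨j, hj⟩ := a.crit_only (t - 2 * Real.pi) ⟨by linarith, by
        linarith [ht.2, (a.theta_mem (a.next i)).2]⟩ hd
      have h1 : a.θ j < a.θ (a.next i) := by rw [← hj]; linarith [ht.2]
      have h1 := a.theta_mono.lt_iff_lt.1 h1
      rw [Fin.lt_def] at h1
      omega

lemma aux_triple {n : ℕ} (a : Ribbon n) (f : E2 → ℝ) (hf : IsExtension a f) (i : Fin n)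
    (hν : a.ν (a.next i) = 1) (hmax : deriv (deriv a.g) (a.θ (a.next i)) < 0) :
    0 < deriv (deriv a.g) (a.θ i) ∧ 0 < deriv (deriv a.g) (a.θ (a.next (a.next i))) ∧
    ∃ l < a.g (a.θ (a.next i)), ∃ S : Set E2, IsPreconnected S ∧
      S ⊆ {x | x ∈ closedBall (0:E2) 1 ∧ f x ≤ l} ∧ sphPt (a.θ i) ∈ S ∧
      sphPt (a.θ (a.next (a.next i))) ∈ S := by
  have hg2 : ContDiff ℝ 2 a.g := a.smooth_g.of_le aux_two_le
  have hf2 : ContDiff ℝ 2 f := hf.1.of_le aux_two_le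
  set j := a.next i with hj
  set k := a.next j with hk
  have P0 : ∀ (e : ℕ) t, a.g (t + e * (2 * Real.pi)) = a.g t := fun e => a.periodic_g.nat_mul e
  have P1 : ∀ (e : ℕ) t, deriv a.g (t + e * (2 * Real.pi)) = deriv a.g t :=
    fun e => (aux_per_deriv _ _ a.periodic_g).nat_mul e
  have P2 : ∀ (e : ℕ) t, deriv (deriv a.g) (t + e * (2 * Real.pi)) = deriv (deriv a.g) t :=
    fun e => (aux_per_deriv _ _ (aux_per_deriv _ _ a.periodic_g)).nat_mul e
  have PS : ∀ (e : ℕ) t, sphPt (t + e * (2 * Real.pi)) = sphPt t :=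
    fun e => Function.Periodic.nat_mul (f := sphPt) sphPt_periodic e
  obtain ⟨β, hβ, ⟨e, he⟩, hβne⟩ := aux_gap a i
  obtain ⟨γ, hγ, ⟨e', he'⟩, hγne⟩ := aux_gap a j
  rw [← hj] at he
  rw [← hk] at he'
  obtain ⟨hL, hL'⟩ := aux_max_left a.g hg2 (a.θ i) β hβ hβne
    (by rw [he, P1]; exact a.node_crit j) (by rw [he, P2]; exact hmax)
    (a.node_crit i) (a.node_nondeg i)
  obtain ⟨hR, hR'⟩ := aux_max_right a.g hg2 (a.θ j) γ hγ hγne (a.node_crit j) hmax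
    (by rw [he', P1]; exact a.node_crit k) (by rw [he', P2]; exact a.node_nondeg k)
  rw [he', P2] at hR
  refine ⟨hL, hR, ?_⟩
  have hrad : 0 < ⟪gradient f (sphPt β), sphPt β⟫ := by
    have := (hf.2.2.2 j).1 hmax
    rw [hν] at this
    rw [he, PS]
    simpa using this
  obtain ⟨l, hl, S, hS, hS1, hS2, hS3⟩ := aux_detour f hf2 a.g hf.2.1 (a.θ i) β
    (γ + e * (2 * Real.pi)) hβ (by rw [he]; linarith) hL' (by
      intro t ht
      have := hR' (t - e * (2 * Real.pi)) ⟨by linarith [ht.1], by linarith [ht.2]⟩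
      rw [← P0 e (t - _), sub_add_cancel] at this
      rw [he, P0]; exact this) hrad
  rw [he, P0] at hl
  rw [PS, he', PS] at hS3
  exact ⟨l, hl, S, hS, hS1, hS2, hS3⟩

lemma aux_circle (x : E2) (hx : x ∈ sphere (0:E2) 1) :
    ∃ t ∈ Ico (0:ℝ) (2 * Real.pi), x = sphPt t := by
  have hn : x 0 ^ 2 + x 1 ^ 2 = 1 := by
    have : ‖x‖ ^ 2 = 1 := by rw [mem_sphere_zero_iff_norm] at hx; rw [hx]; norm_num
    rw [EuclideanSpace.norm_sq_eq] at this
    simpa [Fin.sum_univ_two] using this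
  set z : ℂ := ⟨x 0, x 1⟩ with hz
  have hzn : ‖z‖ = 1 := by
    rw [Complex.norm_def, Complex.normSq_apply, Real.sqrt_eq_one]
    simp only [hz]
    linarith
  have hz0 : z ≠ 0 := by intro h; rw [h] at hzn; simp at hzn
  have hc : Real.cos z.arg = x 0 := by rw [Complex.cos_arg hz0, hzn]; simp [hz]
  have hs : Real.sin z.arg = x 1 := by rw [Complex.sin_arg, hzn]; simp [hz]
  have hxz : x = sphPt z.arg := by
    ext i
    fin_cases i
    · exact hc.symm.trans (sphPt_zero _).symm
    · exact hs.symm.trans (sphPt_one _).symm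
  have h1 := Complex.neg_pi_lt_arg z
  have h2 := Complex.arg_le_pi z
  by_cases h : 0 ≤ z.arg
  · exact ⟨z.arg, ⟨h, by linarith [Real.pi_pos]⟩, hxz⟩
  · exact ⟨z.arg + 2 * Real.pi, ⟨by linarith, by linarith⟩, by rw [sphPt_periodic]; exact hxz⟩

lemma aux_final {n : ℕ} (a : Ribbon n) (f : E2 → ℝ) (hf : IsExtension a f) (p q z : Fin n)
    (hpz : p ≠ z) (hν : a.ν p = 1) (hp : 0 < deriv (deriv a.g) (a.θ p))
    (hz : 0 < deriv (deriv a.g) (a.θ z))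
    (hneg : ∀ j : Fin n, a.ν j = -1 → a.g (a.θ j) ∉ Icc (a.g (a.θ p)) (a.g (a.θ q)))
    (hcrit : ∀ x ∈ critPts f, f x ∉ Icc (a.g (a.θ p)) (a.g (a.θ q)))
    (hconn : ∃ l < a.g (a.θ q), ∃ S : Set E2, IsPreconnected S ∧
      S ⊆ {x | x ∈ closedBall (0:E2) 1 ∧ f x ≤ l} ∧ sphPt (a.θ p) ∈ S ∧
      sphPt (a.θ z) ∈ S) : False := by
  have hg2 : ContDiff ℝ 2 a.g := a.smooth_g.of_le aux_two_le
  have hf2 : ContDiff ℝ 2 f := hf.1.of_le aux_two_le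
  have hfg := hf.2.1
  have hgrad : ∀ x, gradient f x = 0 → fderiv ℝ f x = 0 := by
    intro x h
    rw [← toDual_gradient, h, map_zero]
  have hiso : ∀ j, a.ν j = 1 → 0 < deriv (deriv a.g) (a.θ j) →
      ∀ᶠ y in 𝓝 (sphPt (a.θ j)), y ∈ closedBall (0:E2) 1 → f y ≤ f (sphPt (a.θ j)) →
        y = sphPt (a.θ j) := by
    intro j hj hj2
    refine aux_isolated f hf2 a.g hg2 hfg (a.θ j) (a.node_crit j) hj2 ?_
    have := (hf.2.2.2 j).2 hj2
    rw [hj] at this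
    simpa using this
  have hpos : ∀ j, a.g (a.θ p) ≤ a.g (a.θ j) → a.g (a.θ j) < a.g (a.θ q) → a.ν j = 1 := by
    intro j h1 h2
    rcases a.nu_sign j with h | h
    · exact h
    · exact absurd ⟨h1, h2.le⟩ (hneg j h)
  have hzq : a.g (a.θ z) < a.g (a.θ q) := by
    obtain ⟨l, hl, S, -, hS, -, hzS⟩ := hconn
    have := (hS hzS).2
    rw [hfg] at this
    linarith
  refine aux_core f hf2 (sphPt (a.θ p)) (sphPt (a.θ z)) (a.g (a.θ q)) ?_ hconn ?_ ?_ ?_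
    (hiso p hν hp) ?_
  · intro h
    apply hpz
    apply a.values_distinct
    rw [← hfg, ← hfg, h]
  · intro x hx h1 h2 h0
    rw [hfg] at h1
    exact hcrit x ⟨hx, hgrad x h0⟩ ⟨h1, h2.le⟩
  · intro x hx h0
    exact hf.2.2.1 x hx (hgrad x h0)
  · intro x hx h1 h2 h3
    obtain ⟨t, ht, rfl⟩ := aux_circle x hx
    set G := gradient f (sphPt t) with hG
    have hGeq : G = -(‖G‖ • sphPt t) := by
      have : ‖G + ‖G‖ • sphPt t‖ ^ 2 = 0 := by
        rw [norm_add_sq_real, real_inner_smul_right, h3, norm_smul, sphPt_norm, norm_norm]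
        ring
      exact eq_neg_of_add_eq_zero_left (norm_eq_zero.1 (pow_eq_zero_iff (two_ne_zero) |>.1 this))
    have hd : deriv a.g t = 0 := by
      have h1 : HasDerivAt (fun t => f (sphPt t)) (fderiv ℝ f (sphPt t) (sphPt (t + Real.pi/2))) t :=
        ((hf2.differentiable two_ne_zero).differentiableAt.hasFDerivAt).comp_hasDerivAt t
          (sphPt_hasDerivAt t)
      have h2 : (fun t => f (sphPt t)) = a.g := funext hfg
      rw [h2] at h1
      rw [h1.deriv, ← inner_gradient_left, ← hG, hGeq, inner_neg_left, real_inner_smul_left,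
        sphPt_inner]
      simp
    obtain ⟨j, rfl⟩ := a.crit_only t ht hd
    rw [hfg, hfg] at h1
    rw [hfg] at h2
    have hj := hpos j h1 h2
    refine hiso j hj ?_
    rcases lt_or_gt_of_ne (a.node_nondeg j) with h | h
    · exfalso
      have := (hf.2.2.2 j).1 h
      rw [hj, ← hG, h3] at this
      have h0 := norm_nonneg G
      simp only [Int.cast_one, one_mul] at this
      linarith
    · exact h
  · intro h
    rw [hfg, hfg] at h
    exact hiso z (hpos z h hzq) hz

lemma aux_next_surj {n : ℕ} (a : Ribbon n) (i : Fin n) : ∃ j, a.next j = i := by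
  have hi := i.2
  by_cases h : (i : ℕ) = 0
  · refine ⟨⟨n - 1, by omega⟩, Fin.ext ?_⟩
    show (n - 1 + 1) % n = i
    rw [Nat.sub_add_cancel (by omega), Nat.mod_self, h]
  · refine ⟨⟨i - 1, by omega⟩, Fin.ext ?_⟩
    show ((i:ℕ) - 1 + 1) % n = i
    rw [Nat.sub_add_cancel (by omega), Nat.mod_eq_of_lt hi]

lemma aux_next_next {n : ℕ} (hn : 4 ≤ n) (a : Ribbon n) (i : Fin n) : i ≠ a.next (a.next i) := by
  intro h
  have h1 : (i : ℕ) = (((i:ℕ) + 1) % n + 1) % n := congrArg Fin.val h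
  have hi := i.2
  rcases lt_or_ge ((i:ℕ) + 1) n with h2 | h2
  · rw [Nat.mod_eq_of_lt h2] at h1
    rcases lt_or_ge ((i:ℕ) + 1 + 1) n with h3 | h3
    · rw [Nat.mod_eq_of_lt h3] at h1; omega
    · rw [show (i:ℕ) + 1 + 1 = n by omega, Nat.mod_self] at h1; omega
  · rw [show (i:ℕ) + 1 = n by omega, Nat.mod_self, Nat.mod_eq_of_lt (by omega)] at h1; omega

lemma aux_interval {n : ℕ} (hn : 4 ≤ n) (a : Ribbon n) (f : E2 → ℝ) (hf : IsExtension a f)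
    (i : Fin n) (h1 : a.ν i = 1) (h2 : a.ν (a.next i) = 1)
    (hneg : ∀ j : Fin n, a.ν j = -1 →
          a.g (a.θ j) ∉ Set.uIcc (a.g (a.θ i)) (a.g (a.θ (a.next i)))) :
    ∃ x ∈ critPts f, f x ∈ Set.uIcc (a.g (a.θ i)) (a.g (a.θ (a.next i))) := by
  by_contra hno
  push Not at hno
  have key : ∀ u v x : ℝ, x ∉ uIcc u v → x ∉ Icc u v := fun u v x hx h => hx (Icc_subset_uIcc h)
  have key' : ∀ u v x : ℝ, x ∉ uIcc u v → x ∉ Icc v u := fun u v x hx h => hx (Icc_subset_uIcc' h)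
  rcases lt_or_gt_of_ne (a.node_nondeg (a.next i)) with h | h
  · obtain ⟨hi, hk, hconn⟩ := aux_triple a f hf i h2 h
    exact aux_final a f hf i (a.next i) _ (aux_next_next hn a i) h1 hi hk
      (fun j hj => key _ _ _ (hneg j hj)) (fun x hx => key _ _ _ (hno x hx)) hconn
  · rcases lt_or_gt_of_ne (a.node_nondeg i) with h' | h'
    · obtain ⟨j, rfl⟩ := aux_next_surj a i
      obtain ⟨hi, hk, l, hl, S, hS, hS1, hS2, hS3⟩ := aux_triple a f hf j h1 h'
      exact aux_final a f hf (a.next (a.next j)) (a.next j) j (aux_next_next hn a j).symm h2 hk hi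
        (fun j hj => key' _ _ _ (hneg j hj)) (fun x hx => key' _ _ _ (hno x hx))
        ⟨l, hl, S, hS, hS1, hS3, hS2⟩
    · -- two consecutive minima cannot occur
      exfalso
      have hg2 : ContDiff ℝ 2 a.g := a.smooth_g.of_le aux_two_le
      obtain ⟨β, hβ, ⟨e, he⟩, hβne⟩ := aux_gap a i
      have P1 : deriv a.g β = 0 := by
        rw [he, (aux_per_deriv _ _ a.periodic_g).nat_mul e]; exact a.node_crit _
      have P2 : 0 < deriv (deriv a.g) β := by
        rw [he, (aux_per_deriv _ _ (aux_per_deriv _ _ a.periodic_g)).nat_mul e]; exact h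
      have hA := aux_strictmin a.g hg2 (a.θ i) (a.node_crit i) h'
      have hB := aux_strictmin a.g hg2 β P1 P2
      obtain ⟨t, ht, htne, hlt, -⟩ := aux_freq _ _ β hβ _ (left_mem_Icc.2 hβ.le) hA
      obtain ⟨s, hs, hsne, hlt', -⟩ := aux_freq _ _ β hβ _ (right_mem_Icc.2 hβ.le) hB
      rcases aux_mono a.g hg2 _ β hβne with hm | hm
      · have := hm hs (right_mem_Icc.2 hβ.le) (lt_of_le_of_ne hs.2 hsne)
        linarith
      · have := hm (left_mem_Icc.2 hβ.le) ht (lt_of_le_of_ne ht.1 htne.symm)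
        linarith

lemma aux_main {n : ℕ} (hn : 4 ≤ n) (a : Ribbon n) (f : E2 → ℝ) (hf : IsExtension a f) :
    ((reducedClusterNumber a : ℕ) : ℕ∞) ≤ (critPts f).encard := by
  rcases (critPts f).finite_or_infinite with hfin | hinf
  · classical
    have h1 : reducedClusterNumber a ≤ (hfin.toFinset.image f).card := by
      refine Nat.sInf_le ⟨_, rfl, fun i hi => ?_⟩
      obtain ⟨x, hx, hx'⟩ := aux_interval hn a f hf i hi.1 hi.2.1 hi.2.2
      exact ⟨f x, Finset.mem_image_of_mem f (hfin.mem_toFinset.2 hx), hx'⟩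
    rw [hfin.encard_eq_coe_toFinset_card]
    exact_mod_cast h1.trans Finset.card_image_le
  · rw [hinf.encard_eq]
    exact le_top

/-- Every extension of a ribbon `a` with `n ≥ 4` nodes has at least `δ₀(a)` critical points
in the open unit disk; that is, `γ(a) ≥ δ₀(a)`. -/
theorem stmt_6 (n : ℕ) (hn : 4 ≤ n) (a : Ribbon n) :
    (∀ f : E2 → ℝ, IsExtension a f →
      ((reducedClusterNumber a : ℕ) : ℕ∞) ≤ (critPts f).encard) ∧
    ((reducedClusterNumber a : ℕ∞) ≤ gammaR a) := by
  have h := fun f hf => aux_main hn a f hf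
  refine ⟨h, le_sInf ?_⟩
  rintro k ⟨f, hf, rfl⟩
  exact h f hf
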